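/- arXiv:1801.10436 — 2 statements merged into one kernel-verified Lean document; each statement's English description precedes it below -/
import Mathlib

section
/- There exists a sequence of transitive carefully synchronizing PFAs on two symbols with shortest carefully synchronizing word length Ω(φ^{n/5}) in the number n of states: there exist a constant c > 0 and an integer N such that for every n ≥ N there is a transitive PFA with n states and an alphabet of 2 symbols which is carefully synchronizing and whose shortest carefully synchronizing word has length at least c·φ^{n/5}, where φ = (1+√5)/2. -/
/-- One step of a PFA on an `Option` state. -/
def pfaStep {Q σ : Type*} (δ : Q → σ → Option Q) (o : Option Q) (a : σ) : Option Q :=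
  o.bind fun q => δ q a

/-- The (partial) state reached from `q` after reading word `w` in the PFA `δ`. -/
def pfaRun {Q σ : Type*} (δ : Q → σ → Option Q) (q : Q) (w : List σ) : Option Q :=
  w.foldl (pfaStep δ) (some q)

/-- A word `w` is carefully synchronizing for the PFA `δ`. -/
def IsCareSyncWord {Q σ : Type*} (δ : Q → σ → Option Q) (w : List σ) : Prop :=
  ∃ qs : Q, ∀ q : Q, pfaRun δ q w = some qs

/-- A PFA is transitive if every state can be reached from every state by some word. -/
def PFATransitive {Q σ : Type*} (δ : Q → σ → Option Q) : Prop :=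
  ∀ q q' : Q, ∃ w : List σ, pfaRun δ q w = some q'

/-! ### Runs -/

theorem pfaRun_append {Q σ : Type*} (δ : Q → σ → Option Q) (q : Q) (u v : List σ) :
    pfaRun δ q (u ++ v) = (pfaRun δ q u).bind fun r => pfaRun δ r v := by
  unfold pfaRun
  rw [List.foldl_append]
  cases List.foldl (pfaStep δ) (some q) u with
  | some r => rfl
  | none =>
    induction v with
    | nil => rfl
    | cons c v ih => simpa [pfaStep] using ih

theorem pfaRun_append_of_eq {Q σ : Type*} {δ : Q → σ → Option Q} {q r : Q} {u v : List σ}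
    (h : pfaRun δ q u = some r) : pfaRun δ q (u ++ v) = pfaRun δ r v := by
  rw [pfaRun_append, h, Option.bind_some]

theorem pfaRun_singleton {Q σ : Type*} (δ : Q → σ → Option Q) (q : Q) (c : σ) :
    pfaRun δ q [c] = δ q c := rfl

theorem pfaRun_concat {Q σ : Type*} (δ : Q → σ → Option Q) (q : Q) (u : List σ) (c : σ) :
    pfaRun δ q (u ++ [c]) = (pfaRun δ q u).bind fun r => δ r c :=
  pfaRun_append δ q u [c]

/-- Runs are compatible with homomorphisms of PFAs. -/
theorem pfaRun_map {Q R σ : Type*} {δ : Q → σ → Option Q} {ε : R → σ → Option R} (f : Q → R)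
    (hf : ∀ q c, (δ q c).map f = ε (f q) c) (q : Q) (w : List σ) :
    (pfaRun δ q w).map f = pfaRun ε (f q) w := by
  induction w using List.reverseRecOn with
  | nil => rfl
  | append_singleton u c ih =>
    rw [pfaRun_concat, pfaRun_concat, ← ih]
    cases pfaRun δ q u with
    | none => rfl
    | some r => exact hf r c

/-! ### Padding a PFA by one state -/

/-- Transitive carefully synchronizing binary PFAs all of whose carefully synchronizing words
have length at least `L`, with a state `q₀` that is fixed by the letter `0` and has an incoming
transition from another state. -/
structure IsSlowPFA {Q : Type*} (δ : Q → Fin 2 → Option Q) (q₀ : Q) (L : ℕ) : Prop where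
  transitive : PFATransitive δ
  exists_sync : ∃ w, IsCareSyncWord δ w
  le_length : ∀ w, IsCareSyncWord δ w → L ≤ w.length
  loop : δ q₀ 0 = some q₀
  entry : ∃ p c, p ≠ q₀ ∧ δ p c = some q₀

/-- The PFA `δ` with a twin `none` of `q₀`, reached from `q₀` by the letter `0`. -/
def addTwin {Q : Type*} [DecidableEq Q] (δ : Q → Fin 2 → Option Q) (q₀ : Q) :
    Option Q → Fin 2 → Option (Option Q) :=
  fun x c => if x.getD q₀ = q₀ ∧ c = 0 then some none else (δ (x.getD q₀) c).map some

theorem IsSlowPFA.addTwin {Q : Type*} [DecidableEq Q] {δ : Q → Fin 2 → Option Q} {q₀ : Q} {L : ℕ}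
    (h : IsSlowPFA δ q₀ L) : IsSlowPFA (addTwin δ q₀) none L := by
  have hom : ∀ x c, (_root_.addTwin δ q₀ x c).map (fun y => y.getD q₀) = δ (x.getD q₀) c := by
    intro x c
    unfold _root_.addTwin
    split_ifs with hx
    · rw [hx.1, hx.2, h.loop]; rfl
    · simp [Option.map_map, Function.comp_def]
  have run := pfaRun_map (fun y : Option Q => y.getD q₀) hom
  have lift : ∀ x w q, pfaRun δ (x.getD q₀) w = some q →
      ∃ y : Option Q, pfaRun (_root_.addTwin δ q₀) x w = some y ∧ y.getD q₀ = q := by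
    intro x w q hq
    rw [← run, Option.map_eq_some_iff] at hq
    exact hq
  have eq_some : ∀ (y : Option Q) q, y.getD q₀ = q → q ≠ q₀ → y = some q := by
    rintro (_ | y) q rfl hq
    · exact absurd rfl hq
    · rfl
  have to_none : ∀ y : Option Q, y.getD q₀ = q₀ → _root_.addTwin δ q₀ y 0 = some none := by
    intro y hy
    simp [_root_.addTwin, hy]
  refine ⟨?_, ?_, ?_, to_none none rfl, some q₀, 0, by simp, to_none _ rfl⟩
  · have reach : ∀ (x : Option Q) q, q ≠ q₀ →
        ∃ w, pfaRun (_root_.addTwin δ q₀) x w = some (some q) := by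
      intro x q hq
      obtain ⟨w, hw⟩ := h.transitive (x.getD q₀) q
      obtain ⟨y, hy, hyq⟩ := lift x w q hw
      exact ⟨w, by rw [hy, eq_some y q hyq hq]⟩
    rintro x (_ | q)
    · obtain ⟨w, hw⟩ := h.transitive (x.getD q₀) q₀
      obtain ⟨y, hy, hyq⟩ := lift x w q₀ hw
      exact ⟨w ++ [0], by rw [pfaRun_append_of_eq hy, pfaRun_singleton, to_none y hyq]⟩
    · by_cases hq : q = q₀
      · obtain ⟨p, c, hp, hpc⟩ := h.entry
        obtain ⟨w, hw⟩ := reach x p hp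
        refine ⟨w ++ [c], ?_⟩
        rw [pfaRun_append_of_eq hw, pfaRun_singleton, hq]
        simp [_root_.addTwin, hp, hpc]
      · exact reach x q hq
  · obtain ⟨w, qs, hw⟩ := h.exists_sync
    by_cases hq : qs = q₀
    · refine ⟨w ++ [0], none, fun x => ?_⟩
      obtain ⟨y, hy, hyq⟩ := lift x w qs (hw _)
      rw [pfaRun_append_of_eq hy, pfaRun_singleton, to_none y (hyq.trans hq)]
    · refine ⟨w, some qs, fun x => ?_⟩
      obtain ⟨y, hy, hyq⟩ := lift x w qs (hw _)
      rw [hy, eq_some y qs hyq hq]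
  · rintro w ⟨y, hw⟩
    refine h.le_length w ⟨y.getD q₀, fun q => ?_⟩
    have := run (some q) w
    rw [hw] at this
    exact this.symm

theorem IsSlowPFA.congr {Q R : Type*} {δ : Q → Fin 2 → Option Q} {q₀ : Q} {L : ℕ}
    (h : IsSlowPFA δ q₀ L) (e : Q ≃ R) :
    IsSlowPFA (fun r c => (δ (e.symm r) c).map e) (e q₀) L := by
  have run : ∀ q w, pfaRun (fun r c => (δ (e.symm r) c).map e) (e q) w = (pfaRun δ q w).map e :=
    fun q w => (pfaRun_map (δ := δ) e (by simp) q w).symm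
  refine ⟨fun r r' => ?_, ?_, ?_, by simp [h.loop], ?_⟩
  · obtain ⟨w, hw⟩ := h.transitive (e.symm r) (e.symm r')
    exact ⟨w, by rw [← e.apply_symm_apply r, run, hw]; simp⟩
  · obtain ⟨w, qs, hw⟩ := h.exists_sync
    exact ⟨w, e qs, fun r => by rw [← e.apply_symm_apply r, run, hw]; rfl⟩
  · rintro w ⟨r, hw⟩
    refine h.le_length w ⟨e.symm r, fun q => ?_⟩
    have := hw (e q)
    rw [run, Option.map_eq_some_iff] at this
    obtain ⟨a, ha, rfl⟩ := this
    simpa using ha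
  · obtain ⟨p, c, hp, hpc⟩ := h.entry
    exact ⟨e p, c, by simpa using hp, by simp [hpc]⟩

theorem IsSlowPFA.exists_fin_add {Q : Type*} [Fintype Q] {δ : Q → Fin 2 → Option Q} {q₀ : Q}
    {L : ℕ} (h : IsSlowPFA δ q₀ L) (p : ℕ) :
    ∃ (ε : Fin (Fintype.card Q + p) → Fin 2 → Option (Fin (Fintype.card Q + p))) (r₀ : _),
      IsSlowPFA ε r₀ L := by
  induction p with
  | zero => exact ⟨_, _, h.congr (Fintype.equivFin Q)⟩
  | succ p ih =>
    obtain ⟨ε, r₀, hε⟩ := ih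
    exact ⟨_, _, hε.addTwin.congr finSuccEquivLast.symm⟩

/-! ### The rotating counter

A configuration consists of `k + 2` tokens on a cyclic tape with `k + 2` positions. Token `0`
carries the marker `none`; token `j ≠ 0` carries the digit of weight `3 ^ (j - 1)` of a redundant
ternary number with digits `0, 1, 2, 3`. The tape is either armed (`true`) or not (`false`).
The word `10` rotates an armed tape, and `1` read by an unarmed tape also performs a carry from
position `0` to position `1`; two consecutive letters `0` reset the tape. -/

/-- The states of the rotating counter. -/
abbrev CounterState (k : ℕ) : Type := Bool × Option (Fin 4) × Fin (k + 2)

/-- The symbol at position `p` of the reset tape. -/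
def resetSymbol {k : ℕ} (p : Fin (k + 2)) : Option (Fin 4) := if p = 0 then none else some 0

/-- The carry step on an unarmed tape. -/
def carryStep {k : ℕ} : Option (Fin 4) → Fin (k + 2) → Option (CounterState k)
  | none, p => if p = 1 then some (false, some 0, -1) else some (false, none, p - 1)
  | some d, p =>
    if p = 0 then if d = 3 then some (false, some 0, -1) else none
    else if p = 1 then if d = 3 then none else some (false, some (d + 1), 0)
    else some (false, some d, p - 1)

/-- The transition function of the rotating counter. -/
def counter (k : ℕ) : CounterState k → Fin 2 → Option (CounterState k)
  | (false, x, p), 0 => some (true, x, p)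
  | (true, _, p), 0 => some (true, resetSymbol p, p)
  | (false, x, p), 1 => carryStep x p
  | (true, x, p), 1 => some (false, x, p - 1)

/-- The state of token `j` on the tape rotated by `s` with digits `d`. -/
def token {k : ℕ} (b : Bool) (s : Fin (k + 2)) (d : Fin (k + 2) → Fin 4) (j : Fin (k + 2)) :
    CounterState k :=
  (b, if j = 0 then none else some (d j), j + s)

/-- The digits after a carry from token `i` to token `i + 1`. -/
def carryDigits {k : ℕ} (d : Fin (k + 2) → Fin 4) (i : Fin (k + 2)) : Fin (k + 2) → Fin 4 :=
  fun j => if j = i then 0 else if j = i + 1 then d j + 1 else d j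

theorem counter_carry {k : ℕ} {s : Fin (k + 2)} {d : Fin (k + 2) → Fin 4} {i : Fin (k + 2)}
    (hs : i + s = 0) (hi : i ≠ 0 → d i = 3) (hi' : i + 1 ≠ 0) (hd : d (i + 1) ≠ 3)
    (j : Fin (k + 2)) :
    counter k (token false s d j) 1 = some (token false (s - 1) (carryDigits d i) j) := by
  obtain rfl : s = -i := (neg_eq_of_add_eq_zero_right hs).symm
  have h0 : j + -i = 0 ↔ j = i := by rw [← sub_eq_add_neg, sub_eq_zero]
  have h1 : j + -i = 1 ↔ j = i + 1 := by rw [← sub_eq_add_neg, sub_eq_iff_eq_add, add_comm 1 i]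
  have hsub : j + (-i - 1) = j + -i - 1 := by abel
  unfold counter token carryDigits
  by_cases hj : j = 0
  · subst hj
    have h1' : ¬0 + -i = 1 := fun h => hi' (h1.1 h).symm
    simp only [carryStep, if_true, if_neg h1', hsub]
  · by_cases hji : j = i
    · subst hji
      simp [carryStep, hj, hi hj, hsub]
    · by_cases hji' : j = i + 1
      · subst hji'
        simp [carryStep, hi', hd, hsub]
      · simp [carryStep, hj, h0, h1, hji, hji', hsub]

theorem of_counter_carry {k : ℕ} {s : Fin (k + 2)} {d : Fin (k + 2) → Fin 4} {i : Fin (k + 2)}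
    (hs : i + s = 0) (h : ∀ j, (counter k (token false s d j) 1).isSome) :
    (i ≠ 0 → d i = 3) ∧ (i + 1 ≠ 0 → d (i + 1) ≠ 3) := by
  constructor
  · intro hi
    by_contra hd
    simpa [counter, token, carryStep, hi, hs, hd] using h i
  · intro hi hd
    have hs' : i + 1 + s = 1 := by rw [add_right_comm, hs, zero_add]
    simpa [counter, token, carryStep, hi, hs', hd] using h (i + 1)

/-! ### The lower bound -/

/-- The weight of the digit of token `j`. -/
def tokenWeight {k : ℕ} (j : Fin (k + 2)) : ℕ := if j = 0 then 0 else 3 ^ (j.val - 1)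

/-- The number represented by the digits `d`. -/
def tapeValue {k : ℕ} (d : Fin (k + 2) → Fin 4) : ℕ := ∑ j, (d j).val * tokenWeight j

theorem tokenWeight_add_one {k : ℕ} {i : Fin (k + 2)} (hi : i ≠ 0) (hi' : i + 1 ≠ 0) :
    tokenWeight (i + 1) = 3 * tokenWeight i := by
  have hlast : i ≠ Fin.last (k + 1) := by
    rintro rfl
    exact hi' (Fin.last_add_one _)
  have hval : (i + 1).val = i.val + 1 := Fin.val_add_one_of_lt (Fin.lt_last_iff_ne_last.2 hlast)
  have hpos : 0 < i.val := Nat.pos_of_ne_zero fun h => hi (Fin.ext h)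
  obtain ⟨n, hn⟩ : ∃ n, i.val = n + 1 := ⟨i.val - 1, by omega⟩
  simp only [tokenWeight, hi, hi', if_false, hval, hn]
  simp [pow_succ, mul_comm]

theorem tapeValue_carryDigits {k : ℕ} {d : Fin (k + 2) → Fin 4} {i : Fin (k + 2)}
    (hd : d (i + 1) ≠ 3) :
    tapeValue (carryDigits d i) + (d i).val * tokenWeight i =
      tapeValue d + tokenWeight (i + 1) := by
  have hval : (d (i + 1) + 1).val = (d (i + 1)).val + 1 :=
    Fin.val_add_one_of_lt (Fin.lt_last_iff_ne_last.2 hd)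
  have key : ∀ j, (carryDigits d i j).val * tokenWeight j +
      (if j = i then (d i).val * tokenWeight i else 0) =
      (d j).val * tokenWeight j + (if j = i + 1 then tokenWeight (i + 1) else 0) := by
    intro j
    by_cases hj : j = i
    · subst hj
      simp [carryDigits]
    · by_cases hj' : j = i + 1
      · subst hj'
        simp only [carryDigits, hj, if_false, if_true, hval]
        ring
      · simp [carryDigits, hj, hj']
  have := Finset.sum_congr (rfl : (Finset.univ : Finset (Fin (k + 2))) = _) fun j _ => key j
  simpa [Finset.sum_add_distrib, tapeValue] using this

theorem pow_le_tapeValue {k : ℕ} {d : Fin (k + 2) → Fin 4} (hd : d (Fin.last (k + 1)) = 3) :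
    3 ^ (k + 1) ≤ tapeValue d := by
  calc 3 ^ (k + 1) = (d (Fin.last (k + 1))).val * tokenWeight (Fin.last (k + 1)) := by
        simp [hd, tokenWeight, Fin.last_eq_zero_iff, pow_succ, mul_comm]
    _ ≤ tapeValue d := Finset.single_le_sum (f := fun j => (d j).val * tokenWeight j)
        (fun _ _ => Nat.zero_le _) (Finset.mem_univ _)

theorem token_reset {k : ℕ} (j : Fin (k + 2)) :
    token true 0 0 j = (true, resetSymbol j, j) := by
  simp [token, resetSymbol]

/-- After a short word that is defined everywhere, the tokens of some small number survive. -/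
theorem exists_tape_of_defined {k : ℕ} (w : List (Fin 2)) (hlen : w.length < 3 ^ (k + 1))
    (hw : ∀ q, (pfaRun (counter k) q w).isSome) :
    ∃ b s d, tapeValue d ≤ w.length ∧
      ∀ j, ∃ q, pfaRun (counter k) q w = some (token b s d j) := by
  induction w using List.reverseRecOn with
  | nil => exact ⟨true, 0, 0, by simp [tapeValue], fun j => ⟨_, rfl⟩⟩
  | append_singleton u c ih =>
    rw [List.length_append, List.length_singleton] at hlen ⊢
    obtain ⟨b, s, d, hd, hq⟩ := ih (by omega) fun q => by
      have := hw q
      rw [pfaRun_concat] at this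
      exact Option.isSome_of_isSome_bind this
    have hstep : ∀ j, (counter k (token b s d j) c).isSome := by
      intro j
      obtain ⟨q, hq⟩ := hq j
      have := hw q
      rwa [pfaRun_append_of_eq hq] at this
    have next : ∀ b' s' d', tapeValue d' ≤ u.length + 1 →
        (∀ j, ∃ i, counter k (token b s d i) c = some (token b' s' d' j)) →
        ∃ b s d, tapeValue d ≤ u.length + 1 ∧
          ∀ j, ∃ q, pfaRun (counter k) q (u ++ [c]) = some (token b s d j) := by
      intro b' s' d' hd' hj
      refine ⟨b', s', d', hd', fun j => ?_⟩
      obtain ⟨i, hi⟩ := hj j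
      obtain ⟨q, hq⟩ := hq i
      exact ⟨q, by rw [pfaRun_append_of_eq hq, pfaRun_singleton, hi]⟩
    obtain rfl | rfl : c = 0 ∨ c = 1 := by omega
    · cases b
      · exact next true s d (by omega) fun j => ⟨j, rfl⟩
      · refine next true 0 0 (by simp [tapeValue]) fun j => ⟨j - s, ?_⟩
        rw [token_reset]
        simp [token, counter]
    · cases b
      · have hs : -s + s = 0 := neg_add_cancel s
        obtain ⟨h3, hlt⟩ := of_counter_carry hs hstep
        generalize -s = i at hs h3 hlt
        by_cases hi' : i + 1 = 0
        · have hi : i = Fin.last (k + 1) := by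
            rw [← add_left_inj 1, hi', Fin.last_add_one]
          have := pow_le_tapeValue (hi ▸ h3 (by rintro rfl; simp at hi'))
          omega
        · have hval := tapeValue_carryDigits (hlt hi')
          refine next false (s - 1) (carryDigits d i) ?_
            fun j => ⟨j, counter_carry hs h3 hi' (hlt hi') j⟩
          by_cases hi : i = 0
          · subst hi
            simp [tokenWeight] at hval
            omega
          · rw [tokenWeight_add_one hi hi', h3 hi] at hval
            have : ((3 : Fin 4) : ℕ) = 3 := rfl
            omega
      · refine next false (s - 1) d (by omega) fun j => ⟨j, ?_⟩
        simp [token, counter, add_sub_assoc]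

theorem counter_le_length {k : ℕ} (w : List (Fin 2)) (hw : IsCareSyncWord (counter k) w) :
    3 ^ (k + 1) ≤ w.length := by
  by_contra! hlen
  obtain ⟨qs, hqs⟩ := hw
  obtain ⟨b, s, d, -, h⟩ := exists_tape_of_defined w hlen fun q => by simp [hqs q]
  obtain ⟨q, hq⟩ := h 0
  obtain ⟨q', hq'⟩ := h 1
  rw [hqs] at hq hq'
  have := (Option.some.inj hq).symm.trans (Option.some.inj hq')
  simp [token] at this

/-! ### Reachable configurations -/

/-- Some word takes all tokens of one family of states simultaneously to another family. -/
def FamilyReach {Q σ ι : Type*} (δ : Q → σ → Option Q) (f g : ι → Q) : Prop :=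
  ∃ w, ∀ i, pfaRun δ (f i) w = some (g i)

theorem FamilyReach.refl {Q σ ι : Type*} (δ : Q → σ → Option Q) (f : ι → Q) :
    FamilyReach δ f f := ⟨[], fun _ => rfl⟩

theorem FamilyReach.trans {Q σ ι : Type*} {δ : Q → σ → Option Q} {f g h : ι → Q}
    (hfg : FamilyReach δ f g) (hgh : FamilyReach δ g h) : FamilyReach δ f h := by
  obtain ⟨u, hu⟩ := hfg
  obtain ⟨v, hv⟩ := hgh
  exact ⟨u ++ v, fun i => by rw [pfaRun_append_of_eq (hu i), hv]⟩

theorem FamilyReach.comp {Q σ ι κ : Type*} {δ : Q → σ → Option Q} {f g : ι → Q}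
    (h : FamilyReach δ f g) (e : κ → ι) : FamilyReach δ (f ∘ e) (g ∘ e) :=
  h.imp fun _ hw i => hw (e i)

theorem FamilyReach.step {Q σ ι : Type*} {δ : Q → σ → Option Q} {f g : ι → Q} (c : σ)
    (h : ∀ i, δ (f i) c = some (g i)) : FamilyReach δ f g := ⟨[c], h⟩

theorem reach_rotate {k : ℕ} (b b' : Bool) (s s' : Fin (k + 2)) (d : Fin (k + 2) → Fin 4) :
    FamilyReach (counter k) (token b s d) (token b' s' d) := by
  have arm : ∀ s, FamilyReach (counter k) (token false s d) (token true s d) :=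
    fun s => .step 0 fun _ => rfl
  have disarm : ∀ s, FamilyReach (counter k) (token true s d) (token false (s - 1) d) :=
    fun s => .step 1 fun j => by simp [token, counter, add_sub_assoc]
  have rotate : ∀ t s : Fin (k + 2),
      FamilyReach (counter k) (token true s d) (token true (s - t) d) := by
    intro t s
    induction t using Fin.induction with
    | zero => simpa using FamilyReach.refl _ _
    | succ t ih =>
      have h := (ih.trans (disarm _)).trans (arm _)
      rwa [sub_sub, Fin.coeSucc_eq_succ] at h
  have rotate' : ∀ s s' : Fin (k + 2),
      FamilyReach (counter k) (token true s d) (token true s' d) := by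
    intro s s'
    simpa using rotate (s - s') s
  have start : FamilyReach (counter k) (token b s d) (token true s d) := by
    cases b
    · exact arm s
    · exact .refl _ _
  cases b'
  · have h := (start.trans (rotate' s (s' + 1))).trans (disarm _)
    rwa [add_sub_cancel_right] at h
  · exact start.trans (rotate' s s')

theorem reach_carryDigits {k : ℕ} {d : Fin (k + 2) → Fin 4} {i : Fin (k + 2)}
    (hi : i ≠ 0 → d i = 3) (hi' : i + 1 ≠ 0) (hd : d (i + 1) ≠ 3) :
    FamilyReach (counter k) (token true 0 d) (token true 0 (carryDigits d i)) :=
  ((reach_rotate true false 0 (-i) d).trans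
    (.step 1 (counter_carry (add_neg_cancel i) hi hi' hd))).trans (reach_rotate _ _ _ _ _)

/-- If a digit can be incremented from every value below `3`, it can be raised from `0` to any
value. -/
theorem reach_update_of_increment {k : ℕ} {j : Fin (k + 2)} {d : Fin (k + 2) → Fin 4}
    (hinc : ∀ x : Fin 4, x ≠ 3 → FamilyReach (counter k) (token true 0 (Function.update d j x))
      (token true 0 (Function.update d j (x + 1)))) (x : Fin 4) :
    FamilyReach (counter k) (token true 0 (Function.update d j 0))
      (token true 0 (Function.update d j x)) := by
  induction x using Fin.induction with
  | zero => exact .refl _ _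
  | succ x ih =>
    have h := hinc x.castSucc (Fin.castSucc_lt_last x).ne
    rw [Fin.coeSucc_eq_succ] at h
    exact ih.trans h

theorem reach_increment {k : ℕ} (n : ℕ) (hn : n + 1 < k + 2) (d : Fin (k + 2) → Fin 4)
    (hd : ∀ i : Fin (k + 2), i.val ≤ n → d i = 0) (x : Fin 4) (hx : x ≠ 3) :
    FamilyReach (counter k) (token true 0 (Function.update d ⟨n + 1, hn⟩ x))
      (token true 0 (Function.update d ⟨n + 1, hn⟩ (x + 1))) := by
  induction n generalizing d x with
  | zero =>
    have h := reach_carryDigits (i := 0) (d := Function.update d ⟨0 + 1, hn⟩ x) (by simp) (by simp)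
      (by simpa [Fin.ext_iff, Function.update_apply] using hx)
    convert h using 2
    funext j
    have h1 : (⟨0 + 1, hn⟩ : Fin (k + 2)) = 1 := rfl
    by_cases hj : j = 0
    · subst hj
      simp [carryDigits, h1, hd 0 le_rfl]
    · by_cases hj' : j = 1
      · subst hj'
        simp [carryDigits, h1]
      · simp [carryDigits, h1, hj, hj']
  | succ n ih =>
    set i : Fin (k + 2) := ⟨n + 1, by omega⟩ with hi
    set i' : Fin (k + 2) := ⟨n + 1 + 1, hn⟩ with hi_next
    have hadd : i + 1 = i' := by
      ext
      rw [Fin.val_add_one_of_lt (by rw [Fin.lt_def, Fin.val_last]; simp [hi]; omega)]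
    have hne : i ≠ i' := by simp [hi, hi_next]
    have hi0 : i' ≠ 0 := by simp [hi_next, Fin.ext_iff]
    have h3 := reach_update_of_increment (j := i) (d := Function.update d i' x)
      (fun y hy => ih (by omega) _ (fun l hl => by
        rw [Function.update_of_ne (by simp [hi_next, Fin.ext_iff]; omega)]
        exact hd l (by omega)) y hy) 3
    have hc := reach_carryDigits (i := i) (d := Function.update (Function.update d i' x) i 3)
      (by simp) (by rwa [hadd]) (by rw [hadd]; simpa [hne.symm] using hx)
    have hzero : Function.update (Function.update d i' x) i 0 = Function.update d i' x := by
      rw [Function.update_eq_self_iff, Function.update_of_ne hne, hd i (by simp [hi])]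
    rw [hzero] at h3
    convert h3.trans hc using 2
    funext j
    by_cases hj : j = i
    · rw [hj, Function.update_of_ne hne, hd i le_rfl]
      simp [carryDigits]
    · by_cases hj' : j = i'
      · subst hj'
        simp [carryDigits, hne.symm, hadd]
      · simp [carryDigits, hj, hj', hadd]

theorem reach_digit {k : ℕ} {j : Fin (k + 2)} (hj : j ≠ 0) (x : Fin 4) :
    FamilyReach (counter k) (token true 0 0) (token true 0 (Function.update 0 j x)) := by
  obtain ⟨n, hn⟩ : ∃ n, j.val = n + 1 :=
    Nat.exists_eq_succ_of_ne_zero fun h => hj (Fin.ext h)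
  have hlt : n + 1 < k + 2 := hn ▸ j.isLt
  obtain rfl : j = ⟨n + 1, hlt⟩ := Fin.ext hn
  have h := reach_update_of_increment (fun y hy =>
    reach_increment (k := k) n hlt 0 (fun _ _ => rfl) y hy) x
  rwa [show Function.update (0 : Fin (k + 2) → Fin 4) ⟨n + 1, hlt⟩ 0 = 0 from
    Function.update_eq_self _ _] at h

/-! ### Synchronization -/

/-- The state of the reset tape at position `p`. -/
def resetState {k : ℕ} (p : Fin (k + 2)) : CounterState k := (true, resetSymbol p, p)

theorem token_true_zero_zero {k : ℕ} : token true 0 0 = resetState (k := k) :=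
  funext token_reset

theorem pfaRun_reset {k : ℕ} (q : CounterState k) :
    pfaRun (counter k) q [0, 0] = some (resetState q.2.2) := by
  obtain ⟨_ | _, x, p⟩ := q <;> rfl

theorem reach_reset {k : ℕ} {ι : Type*} (f : ι → CounterState k) :
    FamilyReach (counter k) f (fun i => resetState (f i).2.2) :=
  ⟨[0, 0], fun i => pfaRun_reset (f i)⟩

theorem reach_resetState_add {k : ℕ} (s : Fin (k + 2)) :
    FamilyReach (counter k) resetState (fun p => resetState (p + s)) := by
  rw [← token_true_zero_zero]
  convert (reach_rotate true true 0 s 0).trans (reach_reset _) using 1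
  rw [token_true_zero_zero]
  rfl

/-- An overflow of the counter merges the marker with the last token. -/
theorem reach_overflow {k : ℕ} :
    FamilyReach (counter k) resetState
      (fun p => resetState (if p = 0 then -1 else p) : Fin (k + 2) → CounterState k) := by
  set d : Fin (k + 2) → Fin 4 := Function.update 0 (-1) 3 with hd
  have h : FamilyReach (counter k) resetState (token false 1 d) := by
    rw [← token_true_zero_zero]
    exact (reach_digit (by simp) 3).trans (reach_rotate _ _ _ _ _)
  have hstep : FamilyReach (counter k) (token false 1 d) (fun p =>
      if p = 0 ∨ p = -1 then (false, some 0, -1) else (false, some 0, p)) := by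
    refine .step 1 fun p => ?_
    by_cases hp : p = 0
    · subst hp
      simp [token, counter, carryStep]
    · by_cases hp' : p = -1
      · subst hp'
        simp [token, counter, carryStep, hd]
      · have hp1 : p + 1 ≠ 0 := fun h => hp' (eq_neg_of_add_eq_zero_left h)
        simp [token, counter, carryStep, hd, hp, hp', hp1]
  convert (h.trans hstep).trans (reach_reset _) using 3 with p
  by_cases hp : p = 0
  · simp [hp]
  · by_cases hp' : p = -1
    · simp [hp']
    · simp [hp, hp']

theorem reach_collapse {k : ℕ} (n : ℕ) :
    ∃ g : Fin (k + 2) → Fin (k + 2), FamilyReach (counter k) resetState (resetState ∘ g) ∧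
      ∀ p, g p = 0 ∨ (g p).val = p.val + n := by
  induction n with
  | zero => exact ⟨id, .refl _ _, fun p => .inr rfl⟩
  | succ n ih =>
    obtain ⟨g, hg, hgp⟩ := ih
    refine ⟨fun p => (if g p = 0 then -1 else g p) + 1,
      hg.trans ((reach_overflow.trans ((reach_resetState_add 1).comp _)).comp g), fun p => ?_⟩
    by_cases h0 : g p = 0
    · simp [h0]
    · by_cases hl : g p = Fin.last (k + 1)
      · left
        simp [hl, Fin.last_eq_zero_iff, Fin.last_add_one]
      · right
        simp only [if_neg h0]
        rw [Fin.val_add_one_of_lt (Fin.lt_last_iff_ne_last.2 hl)]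
        rcases hgp p with h | h
        · exact absurd h h0
        · omega

theorem counter_exists_sync (k : ℕ) : ∃ w, IsCareSyncWord (counter k) w := by
  obtain ⟨g, ⟨w, hw⟩, hg⟩ := reach_collapse (k := k) (k + 2)
  refine ⟨[0, 0] ++ w, resetState 0, fun q => ?_⟩
  rw [pfaRun_append_of_eq (pfaRun_reset q), hw]
  have h0 : g q.2.2 = 0 := (hg q.2.2).resolve_right fun h => by
    have := (g q.2.2).isLt
    omega
  simp [h0]

theorem counter_transitive (k : ℕ) : PFATransitive (counter k) := by
  intro q q'
  obtain ⟨b, x, p⟩ := q'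
  obtain ⟨j, w, hw⟩ : ∃ j w, pfaRun (counter k) (resetState j) w = some (b, x, p) := by
    rw [← token_true_zero_zero]
    cases x with
    | none =>
      obtain ⟨w, hw⟩ := reach_rotate true b 0 p (0 : Fin (k + 2) → Fin 4)
      exact ⟨0, w, by rw [hw]; simp [token]⟩
    | some x =>
      obtain ⟨w, hw⟩ := (reach_digit (k := k) (j := 1) (by simp) x).trans
        (reach_rotate true b 0 (p - 1) _)
      exact ⟨1, w, by rw [hw]; simp [token]⟩
  obtain ⟨v, hv⟩ := reach_resetState_add (j - q.2.2)
  refine ⟨[0, 0] ++ (v ++ w), ?_⟩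
  rw [pfaRun_append_of_eq (pfaRun_reset q), pfaRun_append_of_eq (hv _)]
  simpa using hw

theorem counter_isSlowPFA (k : ℕ) : IsSlowPFA (counter k) (resetState 0) (3 ^ (k + 1)) where
  transitive := counter_transitive k
  exists_sync := counter_exists_sync k
  le_length := counter_le_length
  loop := rfl
  entry := ⟨(false, none, 0), 0, by simp [resetState], rfl⟩

theorem golden_rpow_le_three_pow {n k : ℕ} (h : n ≤ 10 * (k + 3)) :
    ((1 + Real.sqrt 5) / 2) ^ ((n : ℝ) / 5) ≤ 27 * 3 ^ k := by
  have h5 : Real.sqrt 5 ^ 2 = 5 := Real.sq_sqrt (by norm_num)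
  have hle : Real.sqrt 5 ≤ 3 := Real.sqrt_le_iff.2 (by norm_num)
  have hge : 1 ≤ Real.sqrt 5 := Real.one_le_sqrt.2 (by norm_num)
  have hn : (n : ℝ) ≤ 10 * (k + 3) := by exact_mod_cast h
  calc ((1 + Real.sqrt 5) / 2) ^ ((n : ℝ) / 5)
      ≤ ((1 + Real.sqrt 5) / 2) ^ ((2 * (k + 3) : ℕ) : ℝ) :=
        Real.rpow_le_rpow_of_exponent_le (by linarith) (by push_cast; linarith)
    _ = (((1 + Real.sqrt 5) / 2) ^ 2) ^ (k + 3) := by rw [Real.rpow_natCast, pow_mul]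
    _ ≤ 3 ^ (k + 3) := by
        gcongr
        nlinarith
    _ = 27 * 3 ^ k := by ring

/-- There is a sequence of transitive carefully synchronizing PFAs on two symbols with
`n` states and shortest carefully synchronizing word length `Ω(φ^{n/5})`,
where `φ = (1+√5)/2` is the golden ratio. -/
theorem exists_binary_transitive_pfa_golden : ∃ c : ℝ, 0 < c ∧ ∃ N : ℕ, ∀ n : ℕ, N ≤ n →
    ∃ δ : Fin n → Fin 2 → Option (Fin n),
      PFATransitive δ ∧ (∃ w : List (Fin 2), IsCareSyncWord δ w) ∧
      ∀ w : List (Fin 2), IsCareSyncWord δ w →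
        c * ((1 + Real.sqrt 5) / 2) ^ ((n : ℝ) / 5) ≤ (w.length : ℝ) := by
  refine ⟨1 / 9, by norm_num, 20, fun n hn => ?_⟩
  obtain ⟨k, p, hp, rfl⟩ : ∃ k p, p < 10 ∧ n = 10 * (k + 2) + p :=
    ⟨n / 10 - 2, n % 10, by omega, by omega⟩
  have hcard : Fintype.card (CounterState k) = 10 * (k + 2) := by
    simp [Fintype.card_prod]
    ring
  have hex := (counter_isSlowPFA k).exists_fin_add p
  rw [hcard] at hex
  obtain ⟨δ, q₀, hδ⟩ := hex
  refine ⟨δ, hδ.transitive, hδ.exists_sync, fun w hw => ?_⟩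
  have hlen : (3 ^ (k + 1) : ℝ) ≤ w.length := by exact_mod_cast hδ.le_length w hw
  have hgold := golden_rpow_le_three_pow (n := 10 * (k + 2) + p) (k := k) (by omega)
  rw [pow_succ] at hlen
  linarith
end

section
/- Let h ≥ 1, m ≥ 2 and k ≥ h+1. Then C^h A^{k−h} rewrites in one or more steps of the system R_{h,m} to C^h A^{k−h−1} B, where A = A^{(1)} and B = A^{(m)}. Furthermore, the smallest possible number of →_{R_{h,m}} steps needed to rewrite C^h A^{k−h} to a string ending in B is exactly f_{h,m}(k), where f_{h,m} satisfies the recursion f_{h,m}(k) = 0 for 1 ≤ k ≤ h and f_{h,m}(k) = (m−1)·(1 + Σ_{j=1}^{h} f_{h,m}(k−j)) for k ≥ h+1. -/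
/-- The alphabet `{A^{(1)}, …, A^{(m)}, C}`: `LetterM.A t` stands for `A^{(t)}` and
`LetterM.C` for `C`. -/
inductive LetterM : Type
  | A (t : ℕ)
  | C
  deriving DecidableEq

open LetterM

/-- The rules of the rewrite system `R_{h,m}`:
`C^i B^{h−i} A^{(t)} → C^i A^{h−i} A^{(t+1)}` for `i = 0,…,h` and `t = 1,…,m−1`,
where `A = A^{(1)}` and `B = A^{(m)}`. -/
def RuleHM (h m : ℕ) (l r : List LetterM) : Prop :=
  ∃ i ≤ h, ∃ t : ℕ, 1 ≤ t ∧ t ≤ m - 1 ∧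
    l = List.replicate i C ++ List.replicate (h - i) (A m) ++ [A t] ∧
    r = List.replicate i C ++ List.replicate (h - i) (A 1) ++ [A (t + 1)]

/-- `u →_{R_{h,m}} v`: one rewrite step of the system `R_{h,m}`. -/
def StepHM (h m : ℕ) (u v : List LetterM) : Prop :=
  ∃ u₁ u₂ l r, RuleHM h m l r ∧ u = u₁ ++ l ++ u₂ ∧ v = u₁ ++ r ++ u₂

/-- `StepHMN h m n u v`: `u` rewrites to `v` in exactly `n` steps of `R_{h,m}`. -/
inductive StepHMN (h m : ℕ) : ℕ → List LetterM → List LetterM → Prop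
  | refl (u : List LetterM) : StepHMN h m 0 u u
  | tail {n : ℕ} {u v w : List LetterM} :
      StepHMN h m n u v → StepHM h m v w → StepHMN h m (n + 1) u w

/-- The number of increments that separate a letter from `A^{(1)}`; it is `0` for `C`. -/
def LetterM.level : LetterM → ℕ
  | A t => t - 1
  | C => 0

/-- Whether a letter is `C`. -/
def LetterM.isC : LetterM → Bool
  | A _ => false
  | C => true

/-- The sum of the levels of the letters of a string whose first letter has position `p`, the
letter at position `q` being weighted by `f q`. -/
def levelWeight (f : ℕ → ℕ) : ℕ → List LetterM → ℕ
  | _, [] => 0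
  | p, x :: xs => f p * x.level + levelWeight f (p + 1) xs

theorem levelWeight_append (f : ℕ → ℕ) (p : ℕ) (u v : List LetterM) :
    levelWeight f p (u ++ v) = levelWeight f p u + levelWeight f (p + u.length) v := by
  induction u generalizing p with
  | nil => simp [levelWeight]
  | cons x xs ih =>
    simp only [List.cons_append, levelWeight, ih, List.length_cons]
    rw [show p + 1 + xs.length = p + (xs.length + 1) by omega]
    ring

theorem levelWeight_replicate (f : ℕ → ℕ) (p n : ℕ) (x : LetterM) :
    levelWeight f p (List.replicate n x) = (∑ j ∈ Finset.range n, f (p + j)) * x.level := by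
  induction n with
  | zero => simp [levelWeight]
  | succ n ih =>
    rw [List.replicate_succ', levelWeight_append, ih, Finset.sum_range_succ]
    simp [levelWeight]
    ring

theorem StepHM.map_isC_eq {h m : ℕ} {u v : List LetterM} (huv : StepHM h m u v) :
    v.map LetterM.isC = u.map LetterM.isC := by
  obtain ⟨u₁, u₂, l, r, ⟨i, -, t, -, -, rfl, rfl⟩, rfl, rfl⟩ := huv
  simp [LetterM.isC]

theorem StepHM.append_right {h m : ℕ} {u v : List LetterM} (huv : StepHM h m u v)
    (w : List LetterM) : StepHM h m (u ++ w) (v ++ w) := by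
  obtain ⟨u₁, u₂, l, r, hr, rfl, rfl⟩ := huv
  exact ⟨u₁, u₂ ++ w, l, r, hr, by simp, by simp⟩

theorem reflTransGen_stepHM_append_right {h m : ℕ} {u v : List LetterM}
    (huv : Relation.ReflTransGen (StepHM h m) u v) (w : List LetterM) :
    Relation.ReflTransGen (StepHM h m) (u ++ w) (v ++ w) :=
  Relation.ReflTransGen.lift (· ++ w) (fun _ _ hab => StepHM.append_right hab w) _ _ huv

theorem exists_stepHMN_of_reflTransGen {h m : ℕ} {u v : List LetterM}
    (huv : Relation.ReflTransGen (StepHM h m) u v) : ∃ n, StepHMN h m n u v := by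
  induction huv with
  | refl => exact ⟨0, .refl u⟩
  | tail _ hstep ih =>
    obtain ⟨n, hn⟩ := ih
    exact ⟨n + 1, hn.tail hstep⟩

/-- If the occurrences of `C` are confined to the first `h` positions, every step raises the
weight with respect to a solution `f` of the recursion by exactly `m - 1`. -/
theorem StepHM.levelWeight_eq {h m : ℕ} {f : ℕ → ℕ}
    (hf0 : ∀ j : ℕ, 1 ≤ j → j ≤ h → f j = 0)
    (hfrec : ∀ j : ℕ, h + 1 ≤ j →
      f j = (m - 1) * (1 + ∑ i ∈ Finset.Icc 1 h, f (j - i)))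
    {u v : List LetterM} {n : ℕ}
    (hu : u.map LetterM.isC = List.replicate h true ++ List.replicate n false)
    (huv : StepHM h m u v) :
    levelWeight f 1 v = levelWeight f 1 u + (m - 1) := by
  obtain ⟨u₁, u₂, l, r, ⟨i, hi, t, ht, -, rfl, rfl⟩, rfl, rfl⟩ := huv
  have hpos : ∀ j < i, u₁.length + j < h := by
    intro j hj
    by_contra hcon
    have hget := congrArg (·[u₁.length + j]?) hu
    simp only [List.map_append, List.map_replicate, List.append_assoc] at hget
    rw [List.getElem?_append_right (by simp), List.getElem?_append_left (by simpa using hj),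
      List.getElem?_append_right (by simpa using hcon)] at hget
    simp [hj, LetterM.isC, List.getElem?_replicate] at hget
  have hprefix : ∑ j ∈ Finset.range i, f (1 + u₁.length + j) = 0 := by
    refine Finset.sum_eq_zero fun j hj => hf0 _ (by omega) ?_
    have := hpos j (Finset.mem_range.1 hj)
    omega
  have hsum : ∑ j ∈ Finset.Icc 1 h, f (1 + u₁.length + h - j) =
      ∑ j ∈ Finset.range (h - i), f (1 + u₁.length + i + j) := by
    have hreflect : ∑ j ∈ Finset.Icc 1 h, f (1 + u₁.length + h - j) =
        ∑ j ∈ Finset.range h, f (1 + u₁.length + j) := by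
      refine Finset.sum_bij' (fun j _ => h - j) (fun j _ => h - j) ?_ ?_ ?_ ?_ ?_ <;>
        simp only [Finset.mem_Icc, Finset.mem_range]
      · omega
      · omega
      · omega
      · omega
      · intro j hj
        congr 1
        omega
    rw [hreflect, show h = i + (h - i) by omega, Finset.sum_range_add, hprefix, zero_add]
    simp [add_assoc]
  have hrec := hfrec (1 + u₁.length + h) (by omega)
  rw [hsum] at hrec
  have hlen : 1 + u₁.length + (i + (h - i)) = 1 + u₁.length + h := by omega
  simp only [levelWeight_append, levelWeight_replicate, levelWeight, LetterM.level,
    List.length_append, List.length_replicate, List.length_cons, List.length_nil, hlen]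
  obtain ⟨s, rfl⟩ : ∃ s, t = s + 1 := ⟨t - 1, by omega⟩
  simp only [Nat.add_sub_cancel, Nat.sub_self, mul_zero, add_zero]
  linear_combination hrec

theorem StepHMN.map_isC_eq {h m n : ℕ} {u v : List LetterM} (huv : StepHMN h m n u v) :
    v.map LetterM.isC = u.map LetterM.isC := by
  induction huv with
  | refl => rfl
  | tail _ hstep ih => rw [hstep.map_isC_eq, ih]

theorem StepHMN.levelWeight_eq {h m : ℕ} {f : ℕ → ℕ}
    (hf0 : ∀ j : ℕ, 1 ≤ j → j ≤ h → f j = 0)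
    (hfrec : ∀ j : ℕ, h + 1 ≤ j →
      f j = (m - 1) * (1 + ∑ i ∈ Finset.Icc 1 h, f (j - i)))
    {u v : List LetterM} {n l : ℕ}
    (hu : u.map LetterM.isC = List.replicate h true ++ List.replicate l false)
    (huv : StepHMN h m n u v) :
    levelWeight f 1 v = levelWeight f 1 u + n * (m - 1) := by
  induction huv with
  | refl => simp
  | tail hprev hstep ih =>
    rw [hstep.levelWeight_eq hf0 hfrec (hprev.map_isC_eq.trans hu), ih hu]
    ring

/-- Once the (at most `h`) letters `A` next to the last one are all `B`, the last letter can be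
incremented. -/
theorem stepHM_increment_last {h m t : ℕ} (ht : 1 ≤ t) (htm : t < m) (j : ℕ) :
    StepHM h m
      (List.replicate h C ++ List.replicate (j - min h j) (A 1) ++
        List.replicate (min h j) (A m) ++ [A t])
      (List.replicate h C ++ List.replicate j (A 1) ++ [A (t + 1)]) := by
  rcases le_total h j with hj | hj
  · refine ⟨List.replicate h C ++ List.replicate (j - h) (A 1), [], _, _,
      ⟨0, by omega, t, ht, by omega, rfl, rfl⟩, ?_, ?_⟩
    · simp [hj]
    · have hsplit : List.replicate j (A 1) =
          List.replicate (j - h) (A 1) ++ List.replicate h (A 1) := by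
        rw [List.replicate_append_replicate, Nat.sub_add_cancel hj]
      simp only [hsplit, List.append_assoc, List.replicate_zero, List.nil_append,
        List.append_nil, Nat.sub_zero]
  · have hsplit : List.replicate h C = List.replicate j C ++ List.replicate (h - j) C := by
      rw [List.replicate_append_replicate, Nat.add_sub_cancel' hj]
    refine ⟨List.replicate j C, [], _, _,
      ⟨h - j, by omega, t, ht, by omega, rfl, rfl⟩, ?_, ?_⟩
    · simp only [hsplit, min_eq_right hj, Nat.sub_sub_self hj, Nat.sub_self, List.append_assoc,
        List.replicate_zero, List.append_nil]
    · simp only [hsplit, Nat.sub_sub_self hj, List.append_assoc, List.append_nil]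

theorem reflTransGen_stepHM_last {h m : ℕ} (hm : 1 ≤ m) (j : ℕ) :
    Relation.ReflTransGen (StepHM h m)
      (List.replicate h C ++ List.replicate j (A 1) ++ [A 1])
      (List.replicate h C ++ List.replicate j (A 1) ++ [A m]) := by
  induction j using Nat.strong_induction_on with
  | _ j ih =>
    have hfill : ∀ s ≤ j, Relation.ReflTransGen (StepHM h m)
        (List.replicate h C ++ List.replicate j (A 1))
        (List.replicate h C ++ List.replicate (j - s) (A 1) ++ List.replicate s (A m)) := by
      intro s
      induction s with
      | zero => intro _; simpa using Relation.ReflTransGen.refl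
      | succ s ihs =>
        intro hs
        refine (ihs (by omega)).trans ?_
        have hstep := reflTransGen_stepHM_append_right (ih (j - (s + 1)) (by omega))
          (List.replicate s (A m))
        rw [show j - s = j - (s + 1) + 1 by omega]
        rw [List.replicate_succ' (n := j - (s + 1)), List.replicate_succ (n := s)]
        simpa using hstep
    have hraise : ∀ t, 1 ≤ t → t ≤ m → Relation.ReflTransGen (StepHM h m)
        (List.replicate h C ++ List.replicate j (A 1) ++ [A 1])
        (List.replicate h C ++ List.replicate j (A 1) ++ [A t]) := by
      intro t ht
      induction t, ht using Nat.le_induction with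
      | base => exact fun _ => .refl
      | succ t ht iht =>
        intro htm
        exact ((iht (by omega)).trans (reflTransGen_stepHM_append_right
          (hfill (min h j) (min_le_right h j)) [A t])).tail
            (stepHM_increment_last ht (by omega) j)
    exact hraise m hm le_rfl

/-- For `h ≥ 1`, `m ≥ 2` and `k ≥ h+1`:
`C^h A^{k−h} →_{R_{h,m}}^+ C^h A^{k−h−1} B` (with `A = A^{(1)}`, `B = A^{(m)}`), and
the smallest possible number of `→_{R_{h,m}}` steps needed to rewrite `C^h A^{k−h}` to
a string ending in `B` is exactly `f_{h,m}(k)`, where `f_{h,m}(k) = 0` for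
`1 ≤ k ≤ h` and `f_{h,m}(k) = (m−1)·(1 + Σ_{j=1}^{h} f_{h,m}(k−j))` for `k ≥ h+1`. -/
theorem Rhm_min_steps (h m k : ℕ) (hh : 1 ≤ h) (hm : 2 ≤ m) (hk : h + 1 ≤ k)
    (f : ℕ → ℕ)
    (hf0 : ∀ j : ℕ, 1 ≤ j → j ≤ h → f j = 0)
    (hfrec : ∀ j : ℕ, h + 1 ≤ j →
      f j = (m - 1) * (1 + ∑ i ∈ Finset.Icc 1 h, f (j - i))) :
    Relation.TransGen (StepHM h m)
        (List.replicate h C ++ List.replicate (k - h) (A 1))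
        (List.replicate h C ++ List.replicate (k - h - 1) (A 1) ++ [A m]) ∧
      (∃ v : List LetterM,
          StepHMN h m (f k) (List.replicate h C ++ List.replicate (k - h) (A 1)) v ∧
          v.getLast? = some (A m)) ∧
      ∀ (n : ℕ) (v : List LetterM),
        StepHMN h m n (List.replicate h C ++ List.replicate (k - h) (A 1)) v →
        v.getLast? = some (A m) → f k ≤ n := by
  obtain ⟨j, rfl⟩ : ∃ j, k = h + j + 1 := ⟨k - h - 1, by omega⟩
  have hkh : h + j + 1 - h = j + 1 := by omega
  simp only [hkh, Nat.add_sub_cancel]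
  have hmask : (List.replicate h C ++ List.replicate (j + 1) (A 1)).map LetterM.isC =
      List.replicate h true ++ List.replicate (j + 1) false := by
    simp [LetterM.isC]
  have hstart : levelWeight f 1 (List.replicate h C ++ List.replicate (j + 1) (A 1)) = 0 := by
    simp [levelWeight_append, levelWeight_replicate, LetterM.level]
  have hreach : Relation.ReflTransGen (StepHM h m)
      (List.replicate h C ++ List.replicate (j + 1) (A 1))
      (List.replicate h C ++ List.replicate j (A 1) ++ [A m]) := by
    simpa [List.replicate_succ'] using reflTransGen_stepHM_last (h := h) (m := m) (by omega) j
  refine ⟨?_, ?_, ?_⟩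
  · rcases Relation.reflTransGen_iff_eq_or_transGen.1 hreach with heq | htrans
    · simp [List.replicate_succ'] at heq
      omega
    · exact htrans
  · obtain ⟨n, hn⟩ := exists_stepHMN_of_reflTransGen hreach
    have hweight := hn.levelWeight_eq hf0 hfrec hmask
    have hend : levelWeight f 1 (List.replicate h C ++ List.replicate j (A 1) ++ [A m]) =
        f (h + j + 1) * (m - 1) := by
      simp [levelWeight_append, levelWeight_replicate, levelWeight, LetterM.level,
        add_comm 1, add_right_comm h 1 j]
    rw [hstart, hend, zero_add] at hweight
    have hcount : f (h + j + 1) = n := Nat.eq_of_mul_eq_mul_right (by omega) hweight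
    exact ⟨_, hcount ▸ hn, by simp⟩
  · intro n v hn hlast
    have hweight := hn.levelWeight_eq hf0 hfrec hmask
    have hlen : v.length = h + j + 1 := by
      have := congrArg List.length (hn.map_isC_eq.trans hmask)
      simpa [add_assoc] using this
    obtain ⟨w, rfl⟩ := List.getLast?_eq_some_iff.1 hlast
    have hw : w.length = h + j := by simpa using hlen
    rw [hstart, zero_add, levelWeight_append, hw] at hweight
    simp only [levelWeight, LetterM.level, add_zero] at hweight
    rw [add_comm 1] at hweight
    exact Nat.le_of_mul_le_mul_right (by omega : f (h + j + 1) * (m - 1) ≤ n * (m - 1))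
      (by omega)
end
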